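/- arXiv:math/0605578 — 2 statements merged into one kernel-verified Lean document; each statement's English description precedes it below -/
import Mathlib

section
/- Let R be a commutative noetherian ring, M an R-module, and p ⊆ q prime ideals of R. If the Gorenstein injective dimension Gid_{R_p}(M_p) is finite, then Gid_{R_p}(M_p) ≤ Gid_{R_q}(M_q). -/
universe u

/-- `G` is Gorenstein injective: there is an exact complex of injective modules
`⋯ → I 1 → I 0 → I (-1) → ⋯` which stays exact after applying `Hom_R(J, -)` for every
injective module `J`, such that `G` is the kernel of `I 0 → I (-1)`. -/
def IsGorensteinInjective (R : Type u) [CommRing R]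
    (G : Type u) [AddCommGroup G] [Module R G] : Prop :=
  ∃ (I : ℤ → Type u) (_ : ∀ n, AddCommGroup (I n)) (_ : ∀ n, Module R (I n))
    (d : ∀ n : ℤ, I (n + 1) →ₗ[R] I n),
    (∀ n, Module.Injective R (I n)) ∧
    (∀ n : ℤ, Function.Exact (d (n + 1)) (d n)) ∧
    (∀ (J : Type u) (_ : AddCommGroup J) (_ : Module R J), Module.Injective R J →
      ∀ (n : ℤ) (f : J →ₗ[R] I (n + 1)), (d n).comp f = 0 →
        ∃ g : J →ₗ[R] I (n + 1 + 1), (d (n + 1)).comp g = f) ∧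
    Nonempty (G ≃ₗ[R] LinearMap.ker (d (-1)))

/-- The Gorenstein injective dimension of `M`, as an element of the extended (integer) line:
the infimum of the lengths `n` of exact sequences `0 → M → G 0 → ⋯ → G n → 0`
with each `G j` Gorenstein injective (`sInf ∅ = ⊤`). -/
noncomputable def GorensteinInjectiveDimension (R : Type u) [CommRing R]
    (M : Type u) [AddCommGroup M] [Module R M] : EReal :=
  sInf {i : EReal | ∃ n : ℕ, i = (n : EReal) ∧
    ∃ (G : ℕ → Type u) (_ : ∀ j, AddCommGroup (G j)) (_ : ∀ j, Module R (G j))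
      (ε : M →ₗ[R] G 0) (d : ∀ j, G j →ₗ[R] G (j + 1)),
      (∀ j ≤ n, IsGorensteinInjective R (G j)) ∧
      (∀ j, n < j → Subsingleton (G j)) ∧
      Function.Injective ε ∧ Function.Exact ε (d 0) ∧
      ∀ j, Function.Exact (d j) (d (j + 1))}

namespace GorensteinInjective

open CategoryTheory Abelian

section Torsion

variable {R : Type u} [CommRing R] (S : Submonoid R)

lemma isTorsion'_of_exact {A B C : Type*} [AddCommGroup A] [AddCommGroup B] [AddCommGroup C]
    [Module R A] [Module R B] [Module R C] {f : A → B} {g : B → C}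
    (hf : ∀ (r : R) a, f (r • a) = r • f a) (hg : ∀ (r : R) b, g (r • b) = r • g b)
    (hfg : ∀ b, g b = 0 → ∃ a, f a = b) (hA : Module.IsTorsion' A S) (hC : Module.IsTorsion' C S) :
    Module.IsTorsion' B S := by
  intro b
  obtain ⟨s, hs⟩ := @hC (g b)
  obtain ⟨a, ha⟩ := hfg ((s : R) • b) (by rw [hg]; exact hs)
  obtain ⟨t, ht⟩ := @hA a
  refine ⟨t * s, ?_⟩
  have hfa : f ((t : R) • a) = 0 := by
    have h0 : (t : R) • a = (0 : R) • a := by rw [zero_smul]; exact ht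
    rw [h0, hf, zero_smul]
  rw [hf, ha] at hfa
  rw [mul_smul]
  exact hfa

lemma isTorsion'_of_subsingleton (A : Type*) [AddCommGroup A] [Module R A]
    (h : ∀ a : A, a = 0) : Module.IsTorsion' A S := fun {a} ↦ ⟨1, by rw [one_smul, h a]⟩

variable {S} {T : ShortComplex (ModuleCat.{u} R)} (hT : T.ShortExact)
include hT

lemma isTorsion'_ext_covariant₂ (N : ModuleCat.{u} R) (i : ℕ)
    (h₁ : Module.IsTorsion' (Ext N T.X₁ i) S) (h₃ : Module.IsTorsion' (Ext N T.X₃ i) S) :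
    Module.IsTorsion' (Ext N T.X₂ i) S :=
  isTorsion'_of_exact S (f := fun x : Ext N T.X₁ i ↦ x.comp (Ext.mk₀ T.f) (add_zero i))
    (g := fun x : Ext N T.X₂ i ↦ x.comp (Ext.mk₀ T.g) (add_zero i))
    (by simp) (by simp) (fun b hb ↦ Ext.covariant_sequence_exact₂ N hT b hb) h₁ h₃

lemma isTorsion'_ext_covariant₃ (N : ModuleCat.{u} R) (i : ℕ)
    (h₂ : Module.IsTorsion' (Ext N T.X₂ i) S) (h₁ : Module.IsTorsion' (Ext N T.X₁ (i + 1)) S) :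
    Module.IsTorsion' (Ext N T.X₃ i) S :=
  isTorsion'_of_exact S (f := fun x : Ext N T.X₂ i ↦ x.comp (Ext.mk₀ T.g) (add_zero i))
    (g := fun x : Ext N T.X₃ i ↦ x.comp hT.extClass rfl)
    (by simp) (by simp) (fun b hb ↦ Ext.covariant_sequence_exact₃ N hT b rfl hb) h₂ h₁

lemma isTorsion'_ext_covariant₁ (N : ModuleCat.{u} R) (i : ℕ)
    (h₃ : Module.IsTorsion' (Ext N T.X₃ i) S) (h₂ : Module.IsTorsion' (Ext N T.X₂ (i + 1)) S) :
    Module.IsTorsion' (Ext N T.X₁ (i + 1)) S :=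
  isTorsion'_of_exact S (f := fun x : Ext N T.X₃ i ↦ x.comp hT.extClass rfl)
    (g := fun x : Ext N T.X₁ (i + 1) ↦ x.comp (Ext.mk₀ T.f) (add_zero _))
    (by simp) (by simp) (fun b hb ↦ Ext.covariant_sequence_exact₁ N hT b hb rfl) h₃ h₂

lemma isTorsion'_ext_contravariant₁ (Y : ModuleCat.{u} R) (i : ℕ)
    (h₂ : Module.IsTorsion' (Ext T.X₂ Y i) S) (h₃ : Module.IsTorsion' (Ext T.X₃ Y (1 + i)) S) :
    Module.IsTorsion' (Ext T.X₁ Y i) S :=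
  isTorsion'_of_exact S (f := fun x : Ext T.X₂ Y i ↦ (Ext.mk₀ T.f).comp x (zero_add i))
    (g := fun x : Ext T.X₁ Y i ↦ hT.extClass.comp x rfl)
    (by simp) (by simp) (fun b hb ↦ Ext.contravariant_sequence_exact₁ hT Y b rfl hb) h₂ h₃

lemma isTorsion'_ext_contravariant₃ (Y : ModuleCat.{u} R) (i : ℕ)
    (h₁ : Module.IsTorsion' (Ext T.X₁ Y i) S) (h₂ : Module.IsTorsion' (Ext T.X₂ Y (1 + i)) S) :
    Module.IsTorsion' (Ext T.X₃ Y (1 + i)) S :=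
  isTorsion'_of_exact S (f := fun x : Ext T.X₁ Y i ↦ hT.extClass.comp x rfl)
    (g := fun x : Ext T.X₃ Y (1 + i) ↦ (Ext.mk₀ T.g).comp x (zero_add _))
    (by simp) (by simp) (fun b hb ↦ Ext.contravariant_sequence_exact₃ hT Y b hb rfl) h₁ h₂

end Torsion

section EventuallyTorsion

variable {R : Type u} [CommRing R]

/-- The groups `Ext N K i` are `S`-torsion for all large `i`, uniformly in `K`. -/
def EventuallyTorsionExt (S : Submonoid R) (N : ModuleCat.{u} R) : Prop :=
  ∃ t : ℕ, ∀ (K : ModuleCat.{u} R) (i : ℕ), t < i → Module.IsTorsion' (Ext N K i) S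

lemma smul_ext_eq (r : R) {N K : ModuleCat.{u} R} {i : ℕ} (e : Ext N K i) :
    r • e = (Ext.mk₀ (r • 𝟙 N)).comp e (zero_add i) := by
  rw [Ext.mk₀_smul, Ext.smul_comp, Ext.mk₀_id_comp]

lemma isTorsion'_ext_of_smul_eq_zero {S : Submonoid R} {N : ModuleCat.{u} R} {s : R} (hs : s ∈ S)
    (h : ∀ x : N, s • x = 0) (K : ModuleCat.{u} R) (i : ℕ) : Module.IsTorsion' (Ext N K i) S := by
  intro e
  refine ⟨⟨s, hs⟩, ?_⟩
  change s • e = 0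
  have h0 : s • 𝟙 N = 0 := by ext x; exact h x
  rw [smul_ext_eq, h0, Ext.mk₀_zero, Ext.zero_comp]

variable (I : Ideal R) (x : R)

/-- Multiplication by `x` as a map `R ⧸ (I : x) → R ⧸ I`. -/
noncomputable def colonMul : (R ⧸ I.colon {x}) →ₗ[R] R ⧸ I :=
  Submodule.mapQ _ _ (LinearMap.lsmul R R x) (by
    intro r hr
    simpa [Submodule.mem_colon_singleton, mul_comm] using hr)

lemma colonMul_mk (r : R) : colonMul I x (Submodule.Quotient.mk r) =
    Submodule.Quotient.mk (x * r) := rfl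

lemma colonMul_injective : Function.Injective (colonMul I x) := by
  rw [← LinearMap.ker_eq_bot, LinearMap.ker_eq_bot']
  intro m hm
  obtain ⟨r, rfl⟩ := Submodule.Quotient.mk_surjective _ m
  rw [colonMul_mk, Submodule.Quotient.mk_eq_zero] at hm
  rw [Submodule.Quotient.mk_eq_zero, Submodule.mem_colon_singleton]
  simpa [mul_comm] using hm

lemma exact_colonMul_factor : Function.Exact (colonMul I x)
    (Submodule.factor (le_sup_left : I ≤ I ⊔ Ideal.span {x})) := by
  intro m
  obtain ⟨r, rfl⟩ := Submodule.Quotient.mk_surjective _ m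
  rw [← Submodule.mkQ_apply, Submodule.factor_mk, Submodule.mkQ_apply,
    Submodule.Quotient.mk_eq_zero]
  constructor
  · intro h
    obtain ⟨a, ha, b, hb, rfl⟩ := Submodule.mem_sup.mp h
    obtain ⟨c, rfl⟩ := Ideal.mem_span_singleton'.mp hb
    refine ⟨Submodule.Quotient.mk c, ?_⟩
    rw [colonMul_mk, Submodule.mkQ_apply, Submodule.Quotient.eq]
    have : x * c - (a + c * x) = -a := by ring
    rw [this]
    exact neg_mem ha
  · rintro ⟨c, hc⟩
    obtain ⟨c, rfl⟩ := Submodule.Quotient.mk_surjective _ c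
    rw [colonMul_mk, Submodule.mkQ_apply, Submodule.Quotient.eq] at hc
    have : r = -(x * c - r) + c * x := by ring
    rw [this]
    exact add_mem (neg_mem (Ideal.mem_sup_left hc))
      (Ideal.mem_sup_right (Ideal.mem_span_singleton'.mpr ⟨c, rfl⟩))

/-- The sequence `0 → R ⧸ (I : x) → R ⧸ I → R ⧸ (I + (x)) → 0`. -/
noncomputable abbrev colonSequence : ShortComplex (ModuleCat.{u} R) :=
  ModuleCat.shortComplexOfCompEqZero _ _ (exact_colonMul_factor I x).linearMap_comp_eq_zero

lemma colonSequence_shortExact : (colonSequence I x).ShortExact :=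
  ModuleCat.shortComplex_shortExact _ (exact_colonMul_factor I x) (colonMul_injective I x)
    (Submodule.factor_surjective le_sup_left)

lemma le_colon_singleton : I ≤ I.colon {x} := fun r hr ↦ by
  rw [Submodule.mem_colon_singleton]
  exact I.mul_mem_right x hr

variable {I x}

lemma EventuallyTorsionExt.sup_span_singleton {S : Submonoid R}
    (hI : EventuallyTorsionExt S (ModuleCat.of R (R ⧸ I))) {s : R} (hs : s ∈ S)
    (h : ∀ r, r * x ∈ I → s * r ∈ I) :
    EventuallyTorsionExt S (ModuleCat.of R (R ⧸ (I ⊔ Ideal.span {x}))) := by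
  obtain ⟨t, ht⟩ := hI
  have hB := LinearMap.shortExact_shortComplexKer
    (Submodule.factor_surjective (le_colon_singleton I x))
  have hcolon : ∀ (K : ModuleCat.{u} R) (i : ℕ), t < i →
      Module.IsTorsion' (Ext (ModuleCat.of R (R ⧸ I.colon {x})) K (1 + i)) S := by
    intro K i hi
    refine isTorsion'_ext_contravariant₃ hB K i ?_ (ht _ _ (by lia))
    refine isTorsion'_ext_of_smul_eq_zero hs ?_ K i
    rintro ⟨m, hm⟩
    obtain ⟨r, rfl⟩ := Submodule.Quotient.mk_surjective _ m
    rw [LinearMap.mem_ker, ← Submodule.mkQ_apply, Submodule.factor_mk, Submodule.mkQ_apply,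
      Submodule.Quotient.mk_eq_zero, Submodule.mem_colon_singleton] at hm
    ext
    exact (Submodule.Quotient.mk_eq_zero _).mpr (h r hm)
  refine ⟨t + 2, fun K i hi ↦ ?_⟩
  obtain ⟨j, rfl⟩ : ∃ j, i = 1 + (1 + j) := ⟨i - 2, by lia⟩
  exact isTorsion'_ext_contravariant₃ (colonSequence_shortExact I x) K _
    (hcolon K j (by lia)) (ht _ _ (by lia))

lemma eventuallyTorsionExt_bot (S : Submonoid R) :
    EventuallyTorsionExt S (ModuleCat.of R (R ⧸ (⊥ : Ideal R))) := by
  refine ⟨0, fun K i hi ↦ isTorsion'_of_subsingleton S _ fun e ↦ ?_⟩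
  obtain ⟨j, rfl⟩ : ∃ j, i = j + 1 := ⟨i - 1, by lia⟩
  have : Projective (ModuleCat.of R (R ⧸ (⊥ : Ideal R))) := by
    rw [← IsProjective.iff_projective]
    exact Module.Projective.of_equiv (Submodule.quotEquivOfEqBot (⊥ : Ideal R) rfl).symm
  exact e.eq_zero_of_projective

lemma exists_eventuallyTorsionExt [IsNoetherianRing R] (p : Ideal R) [p.IsPrime] :
    ∃ I : Ideal R, EventuallyTorsionExt p.primeCompl (ModuleCat.of R (R ⧸ I)) ∧
      ∃ f : R ⧸ p →ₗ[R] R ⧸ I, Function.Injective f := by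
  obtain ⟨I, ⟨hIp, hI⟩, hmax⟩ := set_has_maximal_iff_noetherian.mpr ‹IsNoetherianRing R›
    {I : Ideal R | I ≤ p ∧ EventuallyTorsionExt p.primeCompl (ModuleCat.of R (R ⧸ I))}
    ⟨⊥, bot_le, eventuallyTorsionExt_bot _⟩
  refine ⟨I, hI, ?_⟩
  by_contra! hcon
  have hass : p ∉ associatedPrimes R (R ⧸ I) := fun h ↦ by
    obtain ⟨-, f, hf⟩ := (isAssociatedPrime_iff_exists_injective_linearMap p (R ⧸ I)).mp h
    exact hcon f hf
  have hfin : {P | P ∈ associatedPrimes R (R ⧸ I) ∧ P ≤ p}.Finite :=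
    (associatedPrimes.finite R (R ⧸ I)).subset fun P hP ↦ hP.1
  obtain ⟨x, hxp, hx⟩ : ∃ x ∈ p, ∀ P ∈ associatedPrimes R (R ⧸ I), P ≤ p → x ∉ P := by
    by_contra! h
    have hsub : (p : Set R) ⊆ ⋃ P ∈ {P | P ∈ associatedPrimes R (R ⧸ I) ∧ P ≤ p}, (P : Set R) := by
      intro x hx
      obtain ⟨P, hP, hPp, hxP⟩ := h x hx
      exact Set.mem_biUnion (show P ∈ {P | _} from ⟨hP, hPp⟩) hxP
    obtain ⟨P, hP, hpP⟩ := (Ideal.subset_union_prime_finite hfin (f := id) ⊥ ⊥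
      (fun P hP _ _ ↦ hP.1.isPrime)).mp hsub
    exact hass (le_antisymm hpP hP.2 ▸ hP.1)
  let A := LinearMap.ker (LinearMap.lsmul R (R ⧸ I) x)
  obtain ⟨s, hsA, hsp⟩ : ∃ s ∈ Module.annihilator R A, s ∉ p := by
    by_contra! h
    obtain ⟨P, hP, hPp⟩ := Ideal.exists_minimalPrimes_le (show Module.annihilator R A ≤ p from h)
    refine hx P (associatedPrimes.subset_of_injective A.injective_subtype
      (Module.associatedPrimes.minimalPrimes_annihilator_subset_associatedPrimes R A hP)) hPp
      (hP.1.2 (Module.mem_annihilator.mpr fun a ↦ ?_))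
    ext
    exact a.2
  have hs : ∀ r, r * x ∈ I → s * r ∈ I := fun r hr ↦ by
    have hrA : (Submodule.Quotient.mk r : R ⧸ I) ∈ A := by
      refine (Submodule.Quotient.mk_eq_zero I).mpr ?_
      simpa [mul_comm] using hr
    have := congrArg Subtype.val (Module.mem_annihilator.mp hsA ⟨_, hrA⟩)
    exact (Submodule.Quotient.mk_eq_zero I).mp this
  refine hmax _ ⟨sup_le hIp ((Ideal.span_singleton_le_iff_mem p).mpr hxp),
    hI.sup_span_singleton (S := p.primeCompl) hsp hs⟩ (lt_of_le_of_ne le_sup_left fun h ↦ ?_)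
  have hxI : x ∈ I := by
    rw [h]
    exact Ideal.mem_sup_right (Ideal.mem_span_singleton_self x)
  have := hs 1 (by simpa using hxI)
  exact hsp (hIp (by simpa using this))

end EventuallyTorsion

section InjectiveDimension

variable {R : Type u} [CommRing R]

lemma injective_of_ext_quotient_eq_zero (K : ModuleCat.{u} R)
    (h : ∀ (J : Ideal R) (e : Ext (ModuleCat.of R (R ⧸ J)) K 1), e = 0) : Injective K := by
  suffices Module.Injective R K from Module.injective_object_of_injective_module R K
  rw [← Module.Baer.iff_injective]
  intro J g
  have hS : (ModuleCat.shortComplexOfCompEqZero J.subtype J.mkQ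
      (LinearMap.exact_subtype_mkQ J).linearMap_comp_eq_zero).ShortExact :=
    ModuleCat.shortComplex_shortExact _ (LinearMap.exact_subtype_mkQ J) J.injective_subtype
      J.mkQ_surjective
  obtain ⟨y, hy⟩ := Ext.contravariant_sequence_exact₁ hS K
    (Ext.mk₀ (ModuleCat.ofHom g : ModuleCat.of R J ⟶ K)) (add_zero 1) (h J _)
  obtain ⟨y, rfl⟩ := Ext.homEquiv₀.symm.surjective y
  rw [Ext.homEquiv₀_symm_apply, Ext.mk₀_comp_mk₀] at hy
  have hy' := Ext.homEquiv₀.symm.injective (a₁ := _) (a₂ := _) hy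
  exact ⟨y.hom, fun x hx ↦ congrArg (fun f : ModuleCat.of R J ⟶ K ↦ f.hom ⟨x, hx⟩) hy'⟩

lemma hasInjectiveDimensionLT_of_ext_quotient_eq_zero (d : ℕ) (K : ModuleCat.{u} R)
    (h : ∀ (J : Ideal R) (e : Ext (ModuleCat.of R (R ⧸ J)) K (d + 1)), e = 0) :
    HasInjectiveDimensionLT K (d + 1) := by
  induction d generalizing K with
  | zero =>
    have := injective_of_ext_quotient_eq_zero K h
    infer_instance
  | succ d ih =>
    obtain ⟨I, hI, f, hf⟩ := EnoughInjectives.presentation K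
    have hS : (ShortComplex.mk f (Limits.cokernel.π f) (Limits.cokernel.condition f)).ShortExact :=
      { exact := ShortComplex.exact_cokernel f }
    refine (hS.hasInjectiveDimensionLT_X₃_iff d hI).mp (ih _ fun J e ↦ ?_)
    obtain ⟨y, hy⟩ := Ext.covariant_sequence_exact₃ _ hS e rfl (h J _)
    rw [← hy, Ext.eq_zero_of_injective y, Ext.zero_comp]

lemma ext_quotient_colon_eq_zero {d : ℕ} {K : ModuleCat.{u} R} {J : Ideal R} {a : R}
    (hJa : ∀ e : Ext (ModuleCat.of R (R ⧸ (J ⊔ Ideal.span {a}))) K d, e = 0)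
    {e : Ext (ModuleCat.of R (R ⧸ J)) K d}
    (he : (Ext.mk₀ (colonSequence J a).f).comp e (zero_add d) = 0) : e = 0 := by
  obtain ⟨y, rfl⟩ := Ext.contravariant_sequence_exact₂ (colonSequence_shortExact J a) _ e he
  rw [hJa y, Ext.comp_zero]

lemma hasInjectiveDimensionLT_of_isTorsion' [IsNoetherianRing R] (d : ℕ) (K : ModuleCat.{u} R)
    [HasInjectiveDimensionLT K (d + 2)]
    (h : ∀ (p : Ideal R) [p.IsPrime] (N : ModuleCat.{u} R), EventuallyTorsionExt p.primeCompl N →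
      Module.IsTorsion' (Ext N K (d + 1)) p.primeCompl) :
    HasInjectiveDimensionLT K (d + 1) := by
  apply hasInjectiveDimensionLT_of_ext_quotient_eq_zero
  by_contra! hcon
  obtain ⟨J : Ideal R, ⟨e, he⟩, hmax⟩ := set_has_maximal_iff_noetherian.mpr ‹IsNoetherianRing R›
    {J : Ideal R | ∃ e : Ext (ModuleCat.of R (R ⧸ J)) K (d + 1), e ≠ 0} hcon
  have hbig : ∀ J' : Ideal R, J < J' → ∀ e : Ext (ModuleCat.of R (R ⧸ J')) K (d + 1), e = 0 := by
    intro J' hJ' e'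
    by_contra he'
    exact hmax J' ⟨e', he'⟩ hJ'
  have hsup : ∀ a ∉ J, J < J ⊔ Ideal.span {a} := fun a ha ↦
    lt_of_le_of_ne le_sup_left fun h ↦ ha (h ▸ Ideal.mem_sup_right (Ideal.mem_span_singleton_self a))
  have hcolon : ∀ a ∉ J, J.colon {a} = J := by
    intro a ha
    by_contra hne
    refine he (ext_quotient_colon_eq_zero (hbig _ (hsup a ha)) ?_)
    exact hbig _ (lt_of_le_of_ne (le_colon_singleton J a) (Ne.symm hne)) _
  have hprime : Ideal.IsPrime J := by
    refine ⟨fun htop ↦ he ?_, fun {a b} hab ↦ ?_⟩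
    · have : Subsingleton (R ⧸ J) := Ideal.Quotient.subsingleton_iff.mpr htop
      have h0 : 𝟙 (ModuleCat.of R (R ⧸ J)) = 0 := by
        refine ModuleCat.hom_ext (LinearMap.ext fun m ↦ ?_)
        exact Subsingleton.elim (α := R ⧸ J) _ _
      rw [← Ext.mk₀_id_comp e, h0, Ext.mk₀_zero, Ext.zero_comp]
    · by_contra! hab'
      refine hab'.2 ?_
      rw [← hcolon a hab'.1, Submodule.mem_colon_singleton]
      simpa [mul_comm] using hab
  have hreg : ∀ a ∉ J, ∀ e' : Ext (ModuleCat.of R (R ⧸ J)) K (d + 1), a • e' = 0 → e' = 0 := by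
    intro a ha e' he'
    refine ext_quotient_colon_eq_zero (hbig _ (hsup a ha)) ?_
    let π : ModuleCat.of R (R ⧸ J.colon {a}) ⟶ ModuleCat.of R (R ⧸ J) :=
      ModuleCat.ofHom (Submodule.factor (hcolon a ha).le)
    have hπ : (colonSequence J a).f = π ≫ (a • 𝟙 _) := by
      refine ModuleCat.hom_ext (LinearMap.ext fun m ↦ ?_)
      obtain ⟨r, rfl⟩ := Submodule.Quotient.mk_surjective _ m
      rfl
    rw [hπ, ← Ext.mk₀_comp_mk₀, Ext.comp_assoc_of_second_deg_zero, ← smul_ext_eq, he',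
      Ext.comp_zero]
  obtain ⟨I, hI, f, hf⟩ := exists_eventuallyTorsionExt J
  have hS : (ModuleCat.shortComplexOfCompEqZero f f.range.mkQ
      f.exact_map_mkQ_range.linearMap_comp_eq_zero).ShortExact :=
    ModuleCat.shortComplex_shortExact _ f.exact_map_mkQ_range hf (Submodule.mkQ_surjective _)
  have htor : Module.IsTorsion' (Ext (ModuleCat.of R (R ⧸ J)) K (d + 1)) J.primeCompl :=
    isTorsion'_ext_contravariant₁ hS K (d + 1) (h J _ hI)
      (isTorsion'_of_subsingleton _ _ fun e ↦
        e.eq_zero_of_hasInjectiveDimensionLT (d + 2) (by lia))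
  obtain ⟨s, hs⟩ := @htor e
  exact he (hreg s s.2 e hs)

lemma hasInjectiveDimensionLT_of_eventuallyTorsionExt [IsNoetherianRing R] (n d : ℕ)
    (K : ModuleCat.{u} R) (hd : HasInjectiveDimensionLT K (d + 1))
    (h : ∀ (p : Ideal R) [p.IsPrime] (N : ModuleCat.{u} R), EventuallyTorsionExt p.primeCompl N →
      ∀ i, n < i → Module.IsTorsion' (Ext N K i) p.primeCompl) :
    HasInjectiveDimensionLT K (n + 1) := by
  induction d with
  | zero => exact hasInjectiveDimensionLT_of_ge K 1 (n + 1) (by lia)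
  | succ d ih =>
    by_cases hnd : d + 1 ≤ n
    · exact hasInjectiveDimensionLT_of_ge K (d + 2) (n + 1) (by lia)
    · exact ih (hasInjectiveDimensionLT_of_isTorsion' d K
        fun p _ N hN ↦ h p N hN (d + 1) (by lia))

end InjectiveDimension

section ShortExact

variable {R : Type u} [CommRing R]

/-- `0 → A → B → C → 0` is exact. -/
structure IsShortExact {A B C : Type u} [AddCommGroup A] [AddCommGroup B] [AddCommGroup C]
    [Module R A] [Module R B] [Module R C] (f : A →ₗ[R] B) (g : B →ₗ[R] C) : Prop where
  injective : Function.Injective f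
  exact : Function.Exact f g
  surjective : Function.Surjective g

variable {A B C : Type u} [AddCommGroup A] [AddCommGroup B] [AddCommGroup C]
  [Module R A] [Module R B] [Module R C] {f : A →ₗ[R] B} {g : B →ₗ[R] C}

lemma IsShortExact.shortExact (h : IsShortExact f g) :
    (ModuleCat.shortComplexOfCompEqZero f g h.exact.linearMap_comp_eq_zero).ShortExact :=
  ModuleCat.shortComplex_shortExact _ h.exact h.injective h.surjective

/-- The first term of a short exact sequence is the kernel of the second map. -/
noncomputable def IsShortExact.equivKer (h : IsShortExact f g) : A ≃ₗ[R] LinearMap.ker g :=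
  LinearEquiv.ofInjective f h.injective ≪≫ₗ
    LinearEquiv.ofEq _ _ (LinearMap.exact_iff.mp h.exact).symm

lemma isShortExact_ker_subtype (hg : Function.Surjective g) :
    IsShortExact (LinearMap.ker g).subtype g :=
  ⟨Submodule.injective_subtype _, LinearMap.exact_subtype_ker_map g, hg⟩

lemma isShortExact_mkQ_range (hf : Function.Injective f) :
    IsShortExact f (LinearMap.range f).mkQ :=
  ⟨hf, f.exact_map_mkQ_range, Submodule.mkQ_surjective _⟩

lemma IsShortExact.exists_lift (h : IsShortExact f g) {J : Type u} [AddCommGroup J] [Module R J]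
    (hJ : ∀ e : Ext (ModuleCat.of R J) (ModuleCat.of R A) 1, e = 0) (β : J →ₗ[R] C) :
    ∃ β' : J →ₗ[R] B, g.comp β' = β := by
  obtain ⟨y, hy⟩ := Ext.covariant_sequence_exact₃ (ModuleCat.of R J) h.shortExact
    (Ext.mk₀ (ModuleCat.ofHom β)) (zero_add 1) (hJ _)
  obtain ⟨y, rfl⟩ := Ext.homEquiv₀.symm.surjective y
  rw [Ext.homEquiv₀_symm_apply, Ext.mk₀_comp_mk₀] at hy
  have hy' := Ext.homEquiv₀.symm.injective hy
  exact ⟨y.hom, congrArg ModuleCat.Hom.hom hy'⟩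

end ShortExact

section Resolvable

variable {R : Type u} [CommRing R]

/-- `Y` is a quotient of an injective module by a submodule satisfying `P`. -/
def HasInjectiveCover (P : ModuleCat.{u} R → Prop) (Y : ModuleCat.{u} R) : Prop :=
  ∃ (I : ModuleCat.{u} R) (g : I →ₗ[R] Y), Module.Injective R I ∧ Function.Surjective g ∧
    P (ModuleCat.of R (LinearMap.ker g))

lemma HasInjectiveCover.mono {P P' : ModuleCat.{u} R → Prop} (hP : ∀ Y, P Y → P' Y)
    {Y : ModuleCat.{u} R} (h : HasInjectiveCover P Y) : HasInjectiveCover P' Y := by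
  obtain ⟨I, g, hI, hg, hk⟩ := h
  exact ⟨I, g, hI, hg, hP _ hk⟩

lemma HasInjectiveCover.of_equiv {P : ModuleCat.{u} R → Prop} {X Y : ModuleCat.{u} R}
    (e : X ≃ₗ[R] Y) (h : HasInjectiveCover P X) : HasInjectiveCover P Y := by
  obtain ⟨I, g, hI, hg, hk⟩ := h
  refine ⟨I, e.toLinearMap.comp g, hI, e.surjective.comp hg, ?_⟩
  rw [LinearEquiv.ker_comp]
  exact hk

/-- `X` has a left resolution by injective modules. -/
def IsInjectivelyResolvable (X : ModuleCat.{u} R) : Prop :=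
  ∃ P : ModuleCat.{u} R → Prop, P X ∧ ∀ Y, P Y → HasInjectiveCover P Y

lemma IsInjectivelyResolvable.hasInjectiveCover {X : ModuleCat.{u} R}
    (h : IsInjectivelyResolvable X) : HasInjectiveCover IsInjectivelyResolvable X := by
  obtain ⟨P, hX, hP⟩ := h
  exact (hP X hX).mono fun Y hY ↦ ⟨P, hY, hP⟩

lemma IsInjectivelyResolvable.isTorsion'_ext {S : Submonoid R} {N X : ModuleCat.{u} R}
    (hN : EventuallyTorsionExt S N) (hX : IsInjectivelyResolvable X) (i : ℕ) :
    Module.IsTorsion' (Ext N X (i + 1)) S := by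
  obtain ⟨t, ht⟩ := hN
  suffices ∀ (k : ℕ) (X : ModuleCat.{u} R), IsInjectivelyResolvable X → ∀ i, t < i + 1 + k →
      Module.IsTorsion' (Ext N X (i + 1)) S from this t X hX i (by lia)
  intro k
  induction k with
  | zero => exact fun X _ i hi ↦ ht X (i + 1) hi
  | succ k ih =>
    intro X hX i hi
    obtain ⟨I, g, hI, hg, hk⟩ := hX.hasInjectiveCover
    have : Injective I := Module.injective_object_of_injective_module R I
    exact isTorsion'_ext_covariant₃ (isShortExact_ker_subtype hg).shortExact N (i + 1)
      (isTorsion'_of_subsingleton S _ fun e : Ext N I (i + 1) ↦ e.eq_zero_of_injective)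
      (ih _ hk (i + 1) (by lia))

end Resolvable

section GInj

variable {R : Type u} [CommRing R]

/-- The higher extensions of injective modules by `Y` vanish. -/
def ExtInjectiveVanishes (Y : ModuleCat.{u} R) : Prop :=
  ∀ (J : ModuleCat.{u} R), Module.Injective R J → ∀ (i : ℕ) (e : Ext J Y (i + 1)), e = 0

lemma ext_eq_zero_of_injective {I : ModuleCat.{u} R} (hI : Module.Injective R I)
    {N : ModuleCat.{u} R} {i : ℕ} (e : Ext N I (i + 1)) : e = 0 := by
  have : Injective I := Module.injective_object_of_injective_module R I
  exact e.eq_zero_of_injective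

lemma ExtInjectiveVanishes.of_equiv {X Y : ModuleCat.{u} R} (e : X ≃ₗ[R] Y)
    (h : ExtInjectiveVanishes X) : ExtInjectiveVanishes Y := by
  intro J hJ i x
  have hx : (x.comp (Ext.mk₀ e.toModuleIso.inv) (add_zero _)).comp
      (Ext.mk₀ e.toModuleIso.hom) (add_zero _) = x := by
    rw [Ext.comp_assoc_of_third_deg_zero, Ext.mk₀_comp_mk₀, Iso.inv_hom_id, Ext.comp_mk₀_id]
  rw [← hx, h J hJ i (x.comp _ _), Ext.zero_comp]

/-- Gorenstein injectivity, phrased through a left resolution by injective modules all of whose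
syzygies are right orthogonal to the injective modules. -/
def GInj (X : ModuleCat.{u} R) : Prop :=
  ∃ P : ModuleCat.{u} R → Prop, P X ∧ ∀ Y, P Y → ExtInjectiveVanishes Y ∧ HasInjectiveCover P Y

variable {X Y : ModuleCat.{u} R}

lemma GInj.extInjectiveVanishes (h : GInj X) : ExtInjectiveVanishes X := by
  obtain ⟨P, hX, hP⟩ := h
  exact (hP X hX).1

lemma GInj.hasInjectiveCover (h : GInj X) : HasInjectiveCover GInj X := by
  obtain ⟨P, hX, hP⟩ := h
  exact (hP X hX).2.mono fun Y hY ↦ ⟨P, hY, hP⟩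

lemma GInj.isInjectivelyResolvable (h : GInj X) : IsInjectivelyResolvable X :=
  ⟨GInj, h, fun _ hY ↦ hY.hasInjectiveCover⟩

lemma GInj.of_hasInjectiveCover (h : ExtInjectiveVanishes X) (hX : HasInjectiveCover GInj X) :
    GInj X := by
  refine ⟨fun Y ↦ ExtInjectiveVanishes Y ∧ HasInjectiveCover GInj Y, ⟨h, hX⟩, fun Y hY ↦
    ⟨hY.1, hY.2.mono fun Z hZ ↦ ⟨hZ.extInjectiveVanishes, hZ.hasInjectiveCover⟩⟩⟩

lemma GInj.of_equiv (e : X ≃ₗ[R] Y) (h : GInj X) : GInj Y :=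
  .of_hasInjectiveCover (h.extInjectiveVanishes.of_equiv e) (h.hasInjectiveCover.of_equiv e)

lemma GInj.of_injective (h : Module.Injective R X) : GInj X := by
  refine ⟨fun Y ↦ Module.Injective R Y, h, fun Y hY ↦
    ⟨fun J _ i e ↦ ext_eq_zero_of_injective hY e, Y, LinearMap.id, hY, Function.surjective_id, ?_⟩⟩
  have : Subsingleton (LinearMap.ker (LinearMap.id : Y →ₗ[R] Y)) := by
    rw [LinearMap.ker_id]
    infer_instance
  exact ⟨fun _ _ _ _ _ _ _ _ _ ↦ ⟨0, fun _ ↦ Subsingleton.elim _ _⟩⟩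

/-- A quotient of an injective module by a Gorenstein injective one is Gorenstein injective. -/
lemma GInj.of_isShortExact {L K : ModuleCat.{u} R} {f : L →ₗ[R] K} {g : K →ₗ[R] X}
    (h : IsShortExact f g) (hL : GInj L) (hK : Module.Injective R K) : GInj X := by
  refine .of_hasInjectiveCover (fun J hJ i e ↦ ?_)
    ⟨K, g, hK, h.surjective, hL.of_equiv (Y := ModuleCat.of R _) h.equivKer⟩
  obtain ⟨y, rfl⟩ := Ext.covariant_sequence_exact₃ J h.shortExact e rfl
    (hL.extInjectiveVanishes J hJ (i + 1) _)
  rw [ext_eq_zero_of_injective hK y, Ext.zero_comp]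

lemma ExtInjectiveVanishes.of_isShortExact {A Q B : ModuleCat.{u} R} {f : A →ₗ[R] Q}
    {g : Q →ₗ[R] B} (h : IsShortExact f g) (hA : ExtInjectiveVanishes A)
    (hB : ExtInjectiveVanishes B) : ExtInjectiveVanishes Q := by
  intro J hJ i e
  obtain ⟨y, rfl⟩ := Ext.covariant_sequence_exact₂ J h.shortExact e (hB J hJ i _)
  rw [hA J hJ i y, Ext.zero_comp]

/-- The horseshoe construction for coverings by injective modules. -/
lemma exists_cover_of_isShortExact {A Q B IA IB : Type u}
    [AddCommGroup A] [AddCommGroup B] [AddCommGroup Q] [AddCommGroup IA] [AddCommGroup IB]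
    [Module R A] [Module R B] [Module R Q] [Module R IA] [Module R IB]
    {f : A →ₗ[R] Q} {g : Q →ₗ[R] B} (h : IsShortExact f g)
    {α : IA →ₗ[R] A} {β : IB →ₗ[R] B} (hα : Function.Surjective α) (hβ : Function.Surjective β)
    (β' : IB →ₗ[R] Q) (hβ' : g.comp β' = β) :
    ∃ φ : IA × IB →ₗ[R] Q, Function.Surjective φ ∧
      ∃ (f' : LinearMap.ker α →ₗ[R] LinearMap.ker φ) (g' : LinearMap.ker φ →ₗ[R] LinearMap.ker β),
        IsShortExact f' g' := by
  have hβ'' : ∀ y, g (β' y) = β y := fun y ↦ LinearMap.congr_fun hβ' y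
  have hgf : ∀ a, g (f a) = 0 := h.exact.apply_apply_eq_zero
  let φ : IA × IB →ₗ[R] Q := (f.comp α).coprod β'
  have hφ : ∀ x y, φ (x, y) = f (α x) + β' y := fun x y ↦ rfl
  have hsnd : ∀ z, φ z = 0 → β z.2 = 0 := by
    rintro ⟨x, y⟩ hz
    have := congrArg g hz
    rwa [hφ, map_add, hgf, zero_add, hβ'', map_zero] at this
  refine ⟨φ, fun z ↦ ?_, ((LinearMap.inl R IA IB).comp (LinearMap.ker α).subtype).codRestrict _ ?_,
    ((LinearMap.snd R IA IB).comp (LinearMap.ker φ).subtype).codRestrict _ ?_, ?_, ?_, ?_⟩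
  · obtain ⟨y, hy⟩ := hβ (g z)
    obtain ⟨a, ha⟩ := (h.exact (z - β' y)).mp (by rw [map_sub, hβ'', hy, sub_self])
    obtain ⟨x, rfl⟩ := hα a
    exact ⟨(x, y), by rw [hφ, ha, sub_add_cancel]⟩
  · rintro ⟨x, hx⟩
    change φ (x, 0) = 0
    rw [hφ, LinearMap.mem_ker.mp hx, map_zero, map_zero, add_zero]
  · rintro ⟨z, hz⟩
    exact hsnd z hz
  · rintro ⟨x, hx⟩ ⟨y, hy⟩ hxy
    exact Subtype.ext (congrArg (fun z ↦ z.1.1) hxy)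
  · rintro ⟨⟨x, y⟩, hz⟩
    constructor
    · intro h0
      obtain rfl : y = 0 := congrArg Subtype.val h0
      refine ⟨⟨x, h.injective ?_⟩, rfl⟩
      have := LinearMap.mem_ker.mp hz
      rwa [hφ, map_zero, add_zero, ← map_zero f] at this
    · rintro ⟨x', hx'⟩
      exact Subtype.ext (congrArg (fun z ↦ z.1.2) hx').symm
  · rintro ⟨y, hy⟩
    obtain ⟨a, ha⟩ := (h.exact (β' y)).mp (by rw [hβ'']; exact hy)
    obtain ⟨x, rfl⟩ := hα a
    refine ⟨⟨(-x, y), ?_⟩, rfl⟩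
    rw [LinearMap.mem_ker, hφ, map_neg, map_neg, ha, neg_add_cancel]

lemma injective_prod {A B : Type u} [AddCommGroup A] [Module R A] [AddCommGroup B] [Module R B]
    (hA : Module.Injective R A) (hB : Module.Injective R B) : Module.Injective R (A × B) := by
  refine ⟨fun X Y _ _ _ _ f hf g ↦ ?_⟩
  obtain ⟨a, ha⟩ := hA.out f hf ((LinearMap.fst R A B).comp g)
  obtain ⟨b, hb⟩ := hB.out f hf ((LinearMap.snd R A B).comp g)
  exact ⟨a.prod b, fun x ↦ Prod.ext (ha x) (hb x)⟩

/-- The Gorenstein injective modules are closed under extensions. -/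
lemma GInj.extension {A Q B : ModuleCat.{u} R} {f : A →ₗ[R] Q} {g : Q →ₗ[R] B}
    (h : IsShortExact f g) (hA : GInj A) (hB : GInj B) : GInj Q := by
  refine ⟨fun Q ↦ ∃ (A B : ModuleCat.{u} R) (f : A →ₗ[R] Q) (g : Q →ₗ[R] B), IsShortExact f g ∧
    GInj A ∧ GInj B, ⟨A, B, f, g, h, hA, hB⟩, ?_⟩
  rintro Q ⟨A, B, f, g, h, hA, hB⟩
  refine ⟨.of_isShortExact h hA.extInjectiveVanishes hB.extInjectiveVanishes, ?_⟩
  obtain ⟨IA, α, hIA, hα, hkα⟩ := hA.hasInjectiveCover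
  obtain ⟨IB, β, hIB, hβ, hkβ⟩ := hB.hasInjectiveCover
  obtain ⟨β', hβ'⟩ := h.exists_lift (fun e ↦ hA.extInjectiveVanishes _ hIB 0 e) β
  obtain ⟨φ, hφ, f', g', h'⟩ := exists_cover_of_isShortExact h hα hβ β' hβ'
  refine ⟨ModuleCat.of R (IA × IB), φ, ?_, hφ, _, _, f', g', h', hkα, hkβ⟩
  exact injective_prod hIA hIB

end GInj

section GidLE

variable {R : Type u} [CommRing R]

/-- `X` has a right resolution of length `n` by Gorenstein injective modules. -/
def GidLE : ℕ → ModuleCat.{u} R → Prop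
  | 0, X => GInj X
  | n + 1, X => ∃ (H C : ModuleCat.{u} R) (f : X →ₗ[R] H) (g : H →ₗ[R] C), IsShortExact f g ∧
      GInj H ∧ GidLE n C

lemma exists_embedding (X : ModuleCat.{u} R) :
    ∃ (I : ModuleCat.{u} R) (f : X →ₗ[R] I), Module.Injective R I ∧ Function.Injective f := by
  obtain ⟨I, hI, f, hf⟩ := EnoughInjectives.presentation X
  exact ⟨I, f.hom, Module.injective_module_of_injective_object R I,
    (ModuleCat.mono_iff_injective f).mp hf⟩

lemma IsShortExact.hasInjectiveDimensionLT_iff {A I C : ModuleCat.{u} R} {f : A →ₗ[R] I}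
    {g : I →ₗ[R] C} (h : IsShortExact f g) (hI : Module.Injective R I) (n : ℕ) :
    HasInjectiveDimensionLT C (n + 1) ↔ HasInjectiveDimensionLT A (n + 2) :=
  h.shortExact.hasInjectiveDimensionLT_X₃_iff n (Module.injective_object_of_injective_module R I)

lemma injective_of_hasInjectiveDimensionLT_one {K : ModuleCat.{u} R}
    (hK : HasInjectiveDimensionLT K 1) : Module.Injective R K := by
  have : Injective K := injective_iff_hasInjectiveDimensionLT_one.mpr hK
  exact Module.injective_module_of_injective_object R K

lemma hasInjectiveDimensionLT_one_of_injective {K : ModuleCat.{u} R}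
    (hK : Module.Injective R K) : HasInjectiveDimensionLT K 1 := by
  have : Injective K := Module.injective_object_of_injective_module R K
  infer_instance

lemma gidLE_of_hasInjectiveDimensionLT (n : ℕ) (K : ModuleCat.{u} R)
    (hK : HasInjectiveDimensionLT K (n + 1)) : GidLE n K := by
  induction n generalizing K with
  | zero => exact .of_injective (injective_of_hasInjectiveDimensionLT_one hK)
  | succ n ih =>
    obtain ⟨I, f, hI, hf⟩ := exists_embedding K
    have h := isShortExact_mkQ_range hf
    exact ⟨I, ModuleCat.of R (I ⧸ LinearMap.range f), f, _, h, .of_injective hI,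
      ih _ ((h.hasInjectiveDimensionLT_iff (C := ModuleCat.of R _) hI n).mpr hK)⟩

/-- The third isomorphism theorem, as a short exact sequence. -/
lemma exists_isShortExact_quotient {L K X I : Type u}
    [AddCommGroup L] [AddCommGroup K] [AddCommGroup X] [AddCommGroup I]
    [Module R L] [Module R K] [Module R X] [Module R I] {f : L →ₗ[R] K} {g : K →ₗ[R] X}
    (h : IsShortExact f g) {j : K →ₗ[R] I} (hj : Function.Injective j) :
    ∃ (f' : X →ₗ[R] I ⧸ LinearMap.range (j.comp f))
      (g' : (I ⧸ LinearMap.range (j.comp f)) →ₗ[R] I ⧸ LinearMap.range j), IsShortExact f' g' := by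
  have hker : LinearMap.ker g ≤ LinearMap.ker ((LinearMap.range (j.comp f)).mkQ.comp j) := by
    intro x hx
    obtain ⟨y, rfl⟩ := (h.exact x).mp hx
    exact (Submodule.Quotient.mk_eq_zero _).mpr ⟨y, rfl⟩
  let e := g.quotKerEquivOfSurjective h.surjective
  let f' := ((LinearMap.ker g).liftQ _ hker).comp e.symm.toLinearMap
  have hf' : ∀ x, f' (g x) = (LinearMap.range (j.comp f)).mkQ (j x) := fun x ↦ by
    have : e.symm (g x) = Submodule.Quotient.mk x := by
      rw [LinearEquiv.symm_apply_eq]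
      rfl
    change (LinearMap.ker g).liftQ _ hker (e.symm (g x)) = _
    rw [this]
    rfl
  have hle : LinearMap.range (j.comp f) ≤ LinearMap.range j := LinearMap.range_comp_le_range _ _
  refine ⟨f', Submodule.factor hle, ?_, ?_, Submodule.factor_surjective hle⟩
  · rw [injective_iff_map_eq_zero]
    intro x hx
    obtain ⟨x, rfl⟩ := h.surjective x
    rw [hf', Submodule.mkQ_apply, Submodule.Quotient.mk_eq_zero] at hx
    obtain ⟨y, hy⟩ := hx
    rw [← hj hy]
    exact h.exact.apply_apply_eq_zero y
  · intro z
    obtain ⟨z, rfl⟩ := Submodule.mkQ_surjective _ z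
    rw [Submodule.factor_mk, Submodule.mkQ_apply, Submodule.Quotient.mk_eq_zero]
    constructor
    · rintro ⟨x, rfl⟩
      exact ⟨g x, hf' x⟩
    · rintro ⟨x, hx⟩
      obtain ⟨x, rfl⟩ := h.surjective x
      rw [hf', Submodule.mkQ_apply, Submodule.mkQ_apply, Submodule.Quotient.eq] at hx
      have := sub_mem (LinearMap.mem_range_self j x) (hle hx)
      simpa using this

lemma gidLE_of_isShortExact {L K X : ModuleCat.{u} R} {f : L →ₗ[R] K} {g : K →ₗ[R] X}
    (h : IsShortExact f g) (hL : GInj L) (n : ℕ) (hK : HasInjectiveDimensionLT K (n + 1)) :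
    GidLE n X := by
  cases n with
  | zero => exact .of_isShortExact h hL (injective_of_hasInjectiveDimensionLT_one hK)
  | succ n =>
    obtain ⟨I, j, hI, hj⟩ := exists_embedding K
    obtain ⟨f', g', h'⟩ := exists_isShortExact_quotient h hj
    exact ⟨ModuleCat.of R _, ModuleCat.of R _, f', g', h',
      .of_isShortExact (X := ModuleCat.of R _)
        (isShortExact_mkQ_range (f := j.comp f) (hj.comp h.injective)) hL hI,
      gidLE_of_hasInjectiveDimensionLT n _ (((isShortExact_mkQ_range hj).hasInjectiveDimensionLT_iff
        (C := ModuleCat.of R _) hI n).mpr hK)⟩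

lemma GidLE.exists_isShortExact {d : ℕ} {X : ModuleCat.{u} R} (h : GidLE d X) :
    ∃ (L K : ModuleCat.{u} R) (f : L →ₗ[R] K) (g : K →ₗ[R] X), IsShortExact f g ∧ GInj L ∧
      HasInjectiveDimensionLT K (d + 1) := by
  induction d generalizing X with
  | zero =>
    obtain ⟨I, g, hI, hg, hk⟩ := GInj.hasInjectiveCover h
    exact ⟨_, I, _, g, isShortExact_ker_subtype hg, hk, hasInjectiveDimensionLT_one_of_injective hI⟩
  | succ d ih =>
    obtain ⟨G, X', a, b, hab, hG, hX'⟩ := h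
    obtain ⟨L, K, c, k, hck, hL, hK⟩ := ih hX'
    let Q := LinearMap.ker (b.comp (LinearMap.fst R G K) - k.comp (LinearMap.snd R G K))
    have hmem : ∀ x y, (x, y) ∈ Q ↔ b x = k y := fun x y ↦ by
      simp [Q, sub_eq_zero]
    have hck0 : ∀ l, k (c l) = 0 := hck.exact.apply_apply_eq_zero
    let ι : L →ₗ[R] Q := ((LinearMap.inr R G K).comp c).codRestrict Q fun l ↦ by
      change ((0 : G), c l) ∈ Q
      rw [hmem, hck0, map_zero]
    let π : Q →ₗ[R] G := (LinearMap.fst R G K).comp Q.subtype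
    have hιπ : IsShortExact ι π := by
      refine ⟨fun l l' hl ↦ hck.injective (congrArg (fun z ↦ z.1.2) hl), ?_, fun x ↦ ?_⟩
      · rintro ⟨⟨x, y⟩, hz⟩
        constructor
        · rintro rfl
          obtain ⟨l, rfl⟩ := (hck.exact y).mp (by rw [← (hmem _ _).mp hz, map_zero])
          exact ⟨l, rfl⟩
        · rintro ⟨l, hl⟩
          exact (congrArg (fun z ↦ z.1.1) hl).symm
      · obtain ⟨y, hy⟩ := hck.surjective (b x)
        exact ⟨⟨(x, y), (hmem _ _).mpr hy.symm⟩, rfl⟩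
    have hQ : GInj (ModuleCat.of R Q) := .extension (Q := ModuleCat.of R Q) hιπ hL hG
    obtain ⟨I, φ, hI, hφ, hkφ⟩ := hQ.hasInjectiveCover
    let ψ : I →ₗ[R] K := ((LinearMap.snd R G K).comp Q.subtype).comp φ
    have hψ : Function.Surjective ψ := fun y ↦ by
      obtain ⟨x, hx⟩ := hab.surjective (k y)
      obtain ⟨i, hi⟩ := hφ ⟨(x, y), (hmem _ _).mpr hx⟩
      exact ⟨i, congrArg (fun z : Q ↦ z.1.2) hi⟩
    let θ : LinearMap.ker ψ →ₗ[R] LinearMap.ker b :=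
      (π.comp (φ.comp (LinearMap.ker ψ).subtype)).codRestrict _ fun i ↦ by
        have h1 : b (φ i).1.1 = k (φ i).1.2 := (hmem _ _).mp (φ i).2
        have h2 : (φ i).1.2 = 0 := i.2
        rw [h2, map_zero] at h1
        exact h1
    have hθ : ∀ i, (θ i : G) = (φ i).1.1 := fun _ ↦ rfl
    refine ⟨_, ModuleCat.of R (LinearMap.ker ψ),
      Submodule.inclusion (p := LinearMap.ker φ) (p' := LinearMap.ker ψ) ?_,
      hab.equivKer.symm.toLinearMap.comp θ, ⟨Submodule.inclusion_injective _, ?_, ?_⟩, hkφ,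
      ((isShortExact_ker_subtype hψ).hasInjectiveDimensionLT_iff
        (A := ModuleCat.of R _) hI d).mp hK⟩
    · intro i hi
      change (φ i).1.2 = 0
      rw [LinearMap.mem_ker.mp hi]
      rfl
    · intro i
      have h2 : (φ i).1.2 = 0 := i.2
      have key : hab.equivKer.symm.toLinearMap.comp θ i = 0 ↔ φ i = 0 := by
        rw [LinearMap.comp_apply, LinearEquiv.coe_coe, LinearEquiv.map_eq_zero_iff]
        constructor
        · intro h0
          refine Subtype.ext (Prod.ext ?_ h2)
          rw [← hθ, h0]
          rfl
        · intro h0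
          refine Subtype.ext ?_
          rw [hθ, h0]
          rfl
      rw [key]
      exact ⟨fun h0 ↦ ⟨⟨i, h0⟩, rfl⟩, by rintro ⟨j, rfl⟩; exact j.2⟩
    · refine hab.equivKer.symm.surjective.comp ?_
      rintro ⟨x, hx⟩
      obtain ⟨i, hi⟩ := hφ ⟨(x, 0), (hmem _ _).mpr (by rw [map_zero]; exact hx)⟩
      exact ⟨⟨i, congrArg (fun z : Q ↦ z.1.2) hi⟩, Subtype.ext (congrArg (fun z : Q ↦ z.1.1) hi)⟩

end GidLE

section Bridge

variable {R : Type u} [CommRing R]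

lemma IsShortExact.ext_eq_zero_of_lift {A I C J : ModuleCat.{u} R} {f : A →ₗ[R] I}
    {g : I →ₗ[R] C} (h : IsShortExact f g) (hI : Module.Injective R I)
    (hlift : ∀ u : J →ₗ[R] C, ∃ v : J →ₗ[R] I, g.comp v = u) (e : Ext J A 1) : e = 0 := by
  obtain ⟨y, rfl⟩ := Ext.covariant_sequence_exact₁ J h.shortExact e
    (ext_eq_zero_of_injective hI _) rfl
  obtain ⟨u, rfl⟩ := Ext.homEquiv₀.symm.surjective y
  obtain ⟨v, hv⟩ := hlift u.hom
  have hu : u = ModuleCat.ofHom v ≫ ModuleCat.ofHom g := ModuleCat.hom_ext hv.symm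
  have h0 := h.shortExact.comp_extClass
  rw [Ext.homEquiv₀_symm_apply, hu, ← Ext.mk₀_comp_mk₀, Ext.comp_assoc_of_second_deg_zero]
  erw [h0]
  rw [Ext.comp_zero]

lemma IsShortExact.ext_eq_zero_succ {A I C J : ModuleCat.{u} R} {f : A →ₗ[R] I}
    {g : I →ₗ[R] C} (h : IsShortExact f g) (hI : Module.Injective R I) {i : ℕ}
    (hC : ∀ e : Ext J C i, e = 0) (e : Ext J A (i + 1)) : e = 0 := by
  obtain ⟨y, rfl⟩ := Ext.covariant_sequence_exact₁ J h.shortExact e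
    (ext_eq_zero_of_injective hI _) rfl
  rw [hC y, Ext.zero_comp]

lemma GInj.of_isGorensteinInjective {G : Type u} [AddCommGroup G] [Module R G]
    (h : IsGorensteinInjective R G) : GInj (ModuleCat.of R G) := by
  obtain ⟨I, _, _, d, hI, hd, hJ, ⟨e⟩⟩ := h
  let g (n : ℤ) : I (n + 1 + 1) →ₗ[R] LinearMap.ker (d n) :=
    (d (n + 1)).codRestrict _ fun x ↦ (hd n).apply_apply_eq_zero x
  have hker (n : ℤ) : LinearMap.ker (g n) = LinearMap.ker (d (n + 1)) := LinearMap.ker_codRestrict ..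
  have hg (n : ℤ) : Function.Surjective (g n) := by
    rintro ⟨x, hx⟩
    obtain ⟨y, rfl⟩ := (hd n x).mp hx
    exact ⟨y, rfl⟩
  have hext (i : ℕ) : ∀ (J : ModuleCat.{u} R), Module.Injective R J → ∀ (n : ℤ)
      (e : Ext J (ModuleCat.of R (LinearMap.ker (d n))) (i + 1)), e = 0 := by
    induction i with
    | zero =>
      intro J hJ' n e
      obtain ⟨n, rfl⟩ : ∃ m, n = m + 1 := ⟨n - 1, by lia⟩
      revert e
      rw [← hker n]
      refine fun e ↦ (isShortExact_ker_subtype (hg n)).ext_eq_zero_of_lift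
        (A := ModuleCat.of R _) (I := ModuleCat.of R (I (n + 1 + 1))) (C := ModuleCat.of R _)
        (hI _) (fun u ↦ ?_) e
      obtain ⟨v, hv⟩ := hJ J _ _ hJ' n ((LinearMap.ker (d n)).subtype.comp u)
        (LinearMap.ext fun x ↦ (u x).2)
      exact ⟨v, LinearMap.ext fun x ↦ Subtype.ext (LinearMap.congr_fun hv x)⟩
    | succ i ih =>
      intro J hJ' n e
      obtain ⟨n, rfl⟩ : ∃ m, n = m + 1 := ⟨n - 1, by lia⟩
      revert e
      rw [← hker n]
      exact fun e ↦ (isShortExact_ker_subtype (hg n)).ext_eq_zero_succ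
        (A := ModuleCat.of R _) (I := ModuleCat.of R (I (n + 1 + 1))) (C := ModuleCat.of R _)
        (hI _) (ih J hJ' n) e
  refine ⟨fun Y ↦ ∃ n : ℤ, Nonempty (Y ≃ₗ[R] LinearMap.ker (d n)), ⟨-1, ⟨e⟩⟩, ?_⟩
  rintro Y ⟨n, ⟨e⟩⟩
  refine ⟨.of_equiv (X := ModuleCat.of R _) e.symm fun J hJ' i ↦ hext i J hJ' n, ?_⟩
  refine .of_equiv (X := ModuleCat.of R _) e.symm ⟨ModuleCat.of R (I (n + 1 + 1)), g n, hI _, hg n,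
    n + 1, ⟨LinearEquiv.ofEq _ _ (hker n)⟩⟩

/-- `0 → A → I → B → 0` is exact for some injective module `I`. -/
def IsInjectiveStep (A B : ModuleCat.{u} R) : Prop :=
  ∃ (I : ModuleCat.{u} R) (f : A →ₗ[R] I) (g : I →ₗ[R] B), Module.Injective R I ∧ IsShortExact f g

/-- A relation that is total on both sides has two-sided infinite chains through every point. -/
lemma exists_int_chain {α : Type*} {r : α → α → Prop} (hl : ∀ x, ∃ y, r y x)
    (hr : ∀ x, ∃ y, r x y) (x : α) : ∃ z : ℤ → α, z 1 = x ∧ ∀ n, r (z (n + 1)) (z n) := by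
  choose pre hpre using hl
  choose post hpost using hr
  let a (n : ℕ) : α := Nat.rec x (fun _ ↦ pre) n
  let b (n : ℕ) : α := Nat.rec x (fun _ ↦ post) n
  let z : ℤ → α
    | Int.ofNat 0 => b 1
    | Int.ofNat (n + 1) => a n
    | Int.negSucc n => b (n + 2)
  refine ⟨z, rfl, ?_⟩
  rintro ((_ | n) | (_ | n))
  · exact hpost _
  · exact hpre _
  · exact hpost _
  · exact hpost _

lemma GInj.isGorensteinInjective {X : ModuleCat.{u} R} (h : GInj X) :
    IsGorensteinInjective R X := by
  obtain ⟨z, hz, hstep⟩ := exists_int_chain (α := {Y : ModuleCat.{u} R // GInj Y})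
    (r := fun A B ↦ IsInjectiveStep A.1 B.1)
    (fun ⟨Y, hY⟩ ↦ by
      obtain ⟨I, g, hI, hg, hk⟩ := hY.hasInjectiveCover
      exact ⟨⟨_, hk⟩, I, _, g, hI, isShortExact_ker_subtype hg⟩)
    (fun ⟨Y, hY⟩ ↦ by
      obtain ⟨I, f, hI, hf⟩ := exists_embedding Y
      exact ⟨⟨ModuleCat.of R _, .of_isShortExact (X := ModuleCat.of R _)
        (isShortExact_mkQ_range hf) hY hI⟩, I, f, _, hI, isShortExact_mkQ_range hf⟩) ⟨X, h⟩
  choose I f g hI hfg using hstep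
  have hker (n : ℤ) (x : I (n + 1)) : (f n).comp (g (n + 1)) x = 0 ↔ g (n + 1) x = 0 := by
    rw [LinearMap.comp_apply, ← map_zero (f n), (hfg n).injective.eq_iff]
  refine ⟨fun n ↦ I n, inferInstance, inferInstance, fun n ↦ (f n).comp (g (n + 1)), hI, ?_, ?_, ?_⟩
  · intro n x
    rw [hker, (hfg (n + 1)).exact x]
    constructor
    · rintro ⟨y, rfl⟩
      obtain ⟨w, rfl⟩ := (hfg (n + 1 + 1)).surjective y
      exact ⟨w, rfl⟩
    · rintro ⟨w, rfl⟩
      exact ⟨_, rfl⟩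
  · intro J _ _ hJ n u hu
    let v : J →ₗ[R] (z (n + 1 + 1)).1 := (hfg (n + 1)).equivKer.symm.toLinearMap.comp
      (u.codRestrict _ fun x ↦ (hker n _).mp (LinearMap.congr_fun hu x))
    have hv : (f (n + 1)).comp v = u := by
      ext x
      exact congrArg Subtype.val ((hfg (n + 1)).equivKer.apply_symm_apply ⟨u x, _⟩)
    obtain ⟨w, hw⟩ := (hfg (n + 1 + 1)).exists_lift
      (fun e ↦ (z _).2.extInjectiveVanishes (ModuleCat.of R J) hJ 0 e) v
    exact ⟨w, by rw [LinearMap.comp_assoc, hw, hv]⟩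
  · have hX : (z (-1 + 1 + 1)).1 = X := congrArg Subtype.val hz
    have hk : LinearMap.ker ((f (-1)).comp (g (-1 + 1))) = LinearMap.ker (g (-1 + 1)) :=
      Submodule.ext (hker (-1))
    exact ⟨(eqToIso hX.symm).toLinearEquiv ≪≫ₗ (hfg (-1 + 1)).equivKer ≪≫ₗ LinearEquiv.ofEq _ _ hk.symm⟩

lemma gidLE_of_resolution (n : ℕ) (M : Type u) [AddCommGroup M] [Module R M]
    (G : ℕ → Type u) [∀ j, AddCommGroup (G j)] [∀ j, Module R (G j)]
    (ε : M →ₗ[R] G 0) (d : ∀ j, G j →ₗ[R] G (j + 1))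
    (hG : ∀ j ≤ n, IsGorensteinInjective R (G j)) (hG' : ∀ j, n < j → Subsingleton (G j))
    (hε : Function.Injective ε) (hεd : Function.Exact ε (d 0))
    (hd : ∀ j, Function.Exact (d j) (d (j + 1))) : GidLE n (ModuleCat.of R M) := by
  induction n generalizing M G with
  | zero =>
    have := hG' 1 zero_lt_one
    have e := LinearEquiv.ofBijective ε ⟨hε, fun x ↦ (hεd x).mp (Subsingleton.elim _ _)⟩
    exact (GInj.of_isGorensteinInjective (hG 0 le_rfl)).of_equiv (X := ModuleCat.of R _)
      (Y := ModuleCat.of R _) e.symm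
  | succ n ih =>
    let g : G 0 →ₗ[R] LinearMap.ker (d 1) :=
      (d 0).codRestrict _ fun x ↦ (hd 0).apply_apply_eq_zero x
    refine ⟨ModuleCat.of R (G 0), ModuleCat.of R (LinearMap.ker (d 1)), ε, g, ⟨hε, ?_, ?_⟩,
      GInj.of_isGorensteinInjective (hG 0 (by lia)),
      ih _ (fun j ↦ G (j + 1)) (LinearMap.ker (d 1)).subtype (fun j ↦ d (j + 1))
        (fun j hj ↦ hG (j + 1) (by lia)) (fun j hj ↦ hG' (j + 1) (by lia))
        (Submodule.injective_subtype _) (LinearMap.exact_subtype_ker_map _) fun j ↦ hd (j + 1)⟩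
    · intro x
      rw [← hεd x]
      exact Subtype.ext_iff
    · rintro ⟨x, hx⟩
      obtain ⟨y, rfl⟩ := (hd 0 x).mp hx
      exact ⟨y, rfl⟩

lemma exists_resolution_of_gidLE (n : ℕ) (X : ModuleCat.{u} R) (h : GidLE n X) :
    ∃ (G : ℕ → ModuleCat.{u} R) (ε : X →ₗ[R] G 0) (d : ∀ j, G j →ₗ[R] G (j + 1)),
      (∀ j ≤ n, IsGorensteinInjective R (G j)) ∧ (∀ j, n < j → Subsingleton (G j)) ∧
      Function.Injective ε ∧ Function.Exact ε (d 0) ∧ ∀ j, Function.Exact (d j) (d (j + 1)) := by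
  induction n generalizing X with
  | zero =>
    let G : ℕ → ModuleCat.{u} R
      | 0 => X
      | _ + 1 => ModuleCat.of R PUnit
    have hG : ∀ j, 0 < j → Subsingleton (G j) := by
      rintro (_ | j) hj
      · exact absurd hj (lt_irrefl 0)
      · exact inferInstanceAs (Subsingleton PUnit)
    refine ⟨G, LinearMap.id, fun _ ↦ 0, fun j hj ↦ ?_, hG, Function.injective_id, ?_, fun j ↦ ?_⟩
    · obtain rfl : j = 0 := by lia
      exact GInj.isGorensteinInjective h
    · exact fun x ↦ ⟨fun _ ↦ ⟨x, rfl⟩, fun _ ↦ rfl⟩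
    · have := hG (j + 1) (by lia)
      exact fun x ↦ ⟨fun _ ↦ ⟨0, Subsingleton.elim _ _⟩, fun _ ↦ rfl⟩
  | succ n ih =>
    obtain ⟨H, C, f, g, hfg, hH, hC⟩ := h
    obtain ⟨G', ε', d', hG, hG', hε, hεd, hd⟩ := ih C hC
    let G : ℕ → ModuleCat.{u} R
      | 0 => H
      | j + 1 => G' j
    let d : ∀ j, G j →ₗ[R] G (j + 1)
      | 0 => ε'.comp g
      | j + 1 => d' j
    refine ⟨G, f, d, ?_, ?_, hfg.injective, fun x ↦ ?_, ?_⟩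
    · rintro (_ | j) hj
      · exact hH.isGorensteinInjective
      · exact hG j (by lia)
    · rintro (_ | j) hj
      · exact absurd hj (by lia)
      · exact hG' j (by lia)
    · rw [← hfg.exact x]
      exact map_eq_zero_iff ε' hε
    · rintro (_ | j)
      · intro x
        rw [show d (0 + 1) x = 0 ↔ _ from hεd x]
        constructor
        · rintro ⟨c, rfl⟩
          obtain ⟨y, rfl⟩ := hfg.surjective c
          exact ⟨y, rfl⟩
        · rintro ⟨y, rfl⟩
          exact ⟨_, rfl⟩
      · exact hd j

lemma gorensteinInjectiveDimension_eq_sInf (M : Type u) [AddCommGroup M] [Module R M] :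
    GorensteinInjectiveDimension R M =
      sInf {i : EReal | ∃ n : ℕ, i = (n : EReal) ∧ GidLE n (ModuleCat.of R M)} := by
  refine congrArg sInf (Set.ext fun i ↦ ?_)
  refine exists_congr fun n ↦ and_congr_right fun _ ↦ ⟨?_, fun h ↦ ?_⟩
  · rintro ⟨G, _, _, ε, d, hG, hG', hε, hεd, hd⟩
    exact gidLE_of_resolution n M G ε d hG hG' hε hεd hd
  · obtain ⟨G, ε, d, h⟩ := exists_resolution_of_gidLE n _ h
    exact ⟨fun j ↦ G j, inferInstance, inferInstance, ε, d, h⟩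

end Bridge

section Functor

variable {S T : Type u} [CommRing S] [CommRing T] (F : ModuleCat.{u} S ⥤ ModuleCat.{u} T)
  [F.Additive] [Limits.PreservesFiniteLimits F] [Limits.PreservesFiniteColimits F]

lemma IsShortExact.map {A B C : ModuleCat.{u} S} {f : A →ₗ[S] B} {g : B →ₗ[S] C}
    (h : IsShortExact f g) :
    IsShortExact (F.map (ModuleCat.ofHom f)).hom (F.map (ModuleCat.ofHom g)).hom := by
  have hF := h.shortExact.map_of_exact F
  exact ⟨(ModuleCat.mono_iff_injective _).mp hF.mono_f,
    (ShortComplex.ShortExact.moduleCat_exact_iff_function_exact _).mp hF.exact,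
    (ModuleCat.epi_iff_surjective _).mp hF.epi_g⟩

variable [F.PreservesInjectiveObjects]

lemma IsInjectivelyResolvable.map {X : ModuleCat.{u} S} (hX : IsInjectivelyResolvable X) :
    IsInjectivelyResolvable (F.obj X) := by
  refine ⟨fun Y ↦ ∃ X, IsInjectivelyResolvable X ∧ Nonempty (F.obj X ≃ₗ[T] Y),
    ⟨X, hX, ⟨LinearEquiv.refl T _⟩⟩, ?_⟩
  rintro Y ⟨X, hX, ⟨e⟩⟩
  obtain ⟨I, g, hI, hg, hk⟩ := hX.hasInjectiveCover
  have h := (isShortExact_ker_subtype hg).map (A := ModuleCat.of S _) F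
  have hFI : Injective (F.obj I) :=
    F.injective_obj_of_injective (Module.injective_object_of_injective_module S I)
  exact .of_equiv e ⟨F.obj I, _, Module.injective_module_of_injective_object T _, h.surjective,
    _, hk, ⟨h.equivKer⟩⟩

lemma GidLE.isTorsion'_ext {A : Submonoid T} {N : ModuleCat.{u} T}
    (hN : EventuallyTorsionExt A N) {n : ℕ} {Y : ModuleCat.{u} S} (hY : GidLE n Y) {i : ℕ}
    (hi : n < i) : Module.IsTorsion' (Ext N (F.obj Y) i) A := by
  obtain ⟨i, rfl⟩ : ∃ j, i = j + 1 := ⟨i - 1, by lia⟩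
  induction n generalizing Y i with
  | zero => exact ((GInj.isInjectivelyResolvable hY).map F).isTorsion'_ext hN i
  | succ n ih =>
    obtain ⟨H, C, f, g, hfg, hH, hC⟩ := hY
    obtain ⟨j, rfl⟩ : ∃ j, i = j + 1 := ⟨i - 1, by lia⟩
    exact isTorsion'_ext_covariant₁ (hfg.map F).shortExact N (j + 1) (ih hC j (by lia))
      ((hH.isInjectivelyResolvable.map F).isTorsion'_ext hN _)

end Functor

section Localization

variable {R : Type u} [CommRing R]

lemma isLocalizedModule_comp {A B : Submonoid R} (hAB : A ≤ B) {M M' M'' : Type*}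
    [AddCommGroup M] [AddCommGroup M'] [AddCommGroup M''] [Module R M] [Module R M'] [Module R M'']
    (f : M →ₗ[R] M') (g : M' →ₗ[R] M'') [IsLocalizedModule A f] [IsLocalizedModule B g] :
    IsLocalizedModule B (g.comp f) where
  map_units b := IsLocalizedModule.map_units g b
  surj y := by
    obtain ⟨⟨m', b⟩, hb⟩ := IsLocalizedModule.surj B g y
    obtain ⟨⟨m, a⟩, ha⟩ := IsLocalizedModule.surj A f m'
    refine ⟨⟨m, ⟨a, hAB a.2⟩ * b⟩, ?_⟩
    rw [mul_smul, hb, LinearMap.comp_apply, ← ha]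
    exact (g.map_smul (a : R) m').symm
  exists_of_eq {x y} h := by
    obtain ⟨b, hb⟩ := IsLocalizedModule.exists_of_eq (S := B) (f := g) h
    have hb' : f ((b : R) • x) = f ((b : R) • y) := by
      rw [map_smul, map_smul]
      exact hb
    obtain ⟨a, ha⟩ := IsLocalizedModule.exists_of_eq (S := A) (f := f) hb'
    refine ⟨⟨a, hAB a.2⟩ * b, ?_⟩
    rw [mul_smul, mul_smul]
    exact ha

variable (p q : Ideal R) [p.IsPrime] [q.IsPrime]

/-- Localization at `p` of modules over the localization at `q`. -/
noncomputable abbrev localizationFunctor : ModuleCat.{u} (Localization.AtPrime q) ⥤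
    ModuleCat.{u} (Localization.AtPrime p) :=
  ModuleCat.restrictScalars (algebraMap R (Localization.AtPrime q)) ⋙
    ModuleCat.localizedModuleFunctor p.primeCompl

instance : (ModuleCat.restrictScalars.{u}
    (algebraMap R (Localization.AtPrime q))).PreservesInjectiveObjects := by
  have := ModuleCat.preservesFiniteLimits_extendScalars_of_flat
    (f := algebraMap R (Localization.AtPrime q))
    (RingHom.flat_algebraMap_iff.mpr (IsLocalization.flat _ q.primeCompl))
  exact Functor.preservesInjectiveObjects_of_adjunction_of_preservesMonomorphisms
    (ModuleCat.extendRestrictScalarsAdj (algebraMap R (Localization.AtPrime q)))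

variable {p q}

/-- Localizing at `q` and then at `p ≤ q` is localizing at `p`. -/
lemma nonempty_localizationFunctor_equiv (hpq : p ≤ q) (M : Type u) [AddCommGroup M] [Module R M] :
    Nonempty ((localizationFunctor p q).obj
      (ModuleCat.of (Localization.AtPrime q) (LocalizedModule q.primeCompl M))
        ≃ₗ[Localization.AtPrime p] LocalizedModule p.primeCompl M) := by
  let X := (ModuleCat.restrictScalars (algebraMap R (Localization.AtPrime q))).obj
      (ModuleCat.of (Localization.AtPrime q) (LocalizedModule q.primeCompl M))
  let e : LocalizedModule q.primeCompl M ≃ₗ[R] X :=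
    { AddEquiv.refl (LocalizedModule q.primeCompl M) with
      map_smul' := fun r x ↦ (algebraMap_smul (Localization.AtPrime q) r x).symm }
  let f : M →ₗ[R] X := e.toLinearMap.comp (LocalizedModule.mkLinearMap q.primeCompl M)
  have hqp : q.primeCompl ≤ p.primeCompl := fun _ hx hxp ↦ hx (hpq hxp)
  have hf : IsLocalizedModule q.primeCompl f := IsLocalizedModule.of_linearEquiv _ _ e
  have := isLocalizedModule_comp hqp f
    (X.localizedModuleMkLinearMap p.primeCompl)
  exact ⟨(IsLocalizedModule.linearEquiv p.primeCompl
    ((X.localizedModuleMkLinearMap p.primeCompl).comp f)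
    (LocalizedModule.mkLinearMap p.primeCompl M)).extendScalarsOfIsLocalization p.primeCompl
      (Localization.AtPrime p)⟩

end Localization

section Main

lemma isTorsion'_ext_of_equiv {T : Type u} [CommRing T] {A : Submonoid T}
    {N X Y : ModuleCat.{u} T} (e : X ≃ₗ[T] Y) {i : ℕ} (h : Module.IsTorsion' (Ext N X i) A) :
    Module.IsTorsion' (Ext N Y i) A :=
  isTorsion'_of_exact A (f := fun x : Ext N X i ↦ x.comp (Ext.mk₀ e.toModuleIso.hom) (add_zero i))
    (g := fun _ : Ext N Y i ↦ PUnit.unit.{1}) (by simp) (by simp)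
    (fun b _ ↦ ⟨b.comp (Ext.mk₀ e.toModuleIso.inv) (add_zero i), by
      rw [Ext.comp_assoc_of_third_deg_zero, Ext.mk₀_comp_mk₀, Iso.inv_hom_id, Ext.comp_mk₀_id]⟩)
    h (isTorsion'_of_subsingleton A PUnit.{1} fun _ ↦ rfl)

/-- Over a noetherian ring, the finite Gorenstein injective dimension of `X` is detected by the
torsion of `Ext N X i` for the modules `N` whose high extension groups are torsion. -/
lemma GidLE.of_isTorsion'_ext {T : Type u} [CommRing T] [IsNoetherianRing T] {d n : ℕ}
    {X : ModuleCat.{u} T} (hX : GidLE d X)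
    (h : ∀ (P : Ideal T) [P.IsPrime] (N : ModuleCat.{u} T), EventuallyTorsionExt P.primeCompl N →
      ∀ i, n < i → Module.IsTorsion' (Ext N X i) P.primeCompl) : GidLE n X := by
  obtain ⟨L, K, f, g, hfg, hL, hK⟩ := hX.exists_isShortExact
  refine gidLE_of_isShortExact hfg hL n
    (hasInjectiveDimensionLT_of_eventuallyTorsionExt n d K hK fun P _ N hN i hi ↦ ?_)
  obtain ⟨j, rfl⟩ : ∃ j, i = j + 1 := ⟨i - 1, by lia⟩
  exact isTorsion'_ext_covariant₂ hfg.shortExact N (j + 1)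
    (hL.isInjectivelyResolvable.isTorsion'_ext hN j) (h P N hN _ hi)

end Main

end GorensteinInjective

/-- Let `R` be a commutative noetherian ring, `M` an `R`-module, and `p ⊆ q` prime ideals of
`R`.  If the Gorenstein injective dimension `Gid_{R_p}(M_p)` is finite, then
`Gid_{R_p}(M_p) ≤ Gid_{R_q}(M_q)`. -/
theorem gorensteinInjectiveDimension_localization_le
    (R : Type u) [CommRing R] [IsNoetherianRing R]
    (M : Type u) [AddCommGroup M] [Module R M]
    (p q : Ideal R) [p.IsPrime] [q.IsPrime] (hpq : p ≤ q)
    (hfin : GorensteinInjectiveDimension (Localization.AtPrime p)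
      (LocalizedModule p.primeCompl M) ≠ ⊤) :
    GorensteinInjectiveDimension (Localization.AtPrime p)
        (LocalizedModule p.primeCompl M) ≤
      GorensteinInjectiveDimension (Localization.AtPrime q)
        (LocalizedModule q.primeCompl M) := by
  have : IsNoetherianRing (Localization.AtPrime p) :=
    IsLocalization.isNoetherianRing p.primeCompl _ inferInstance
  rw [GorensteinInjective.gorensteinInjectiveDimension_eq_sInf] at hfin
  obtain ⟨d, hd⟩ : ∃ d : ℕ, GorensteinInjective.GidLE d
      (ModuleCat.of (Localization.AtPrime p) (LocalizedModule p.primeCompl M)) := by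
    by_contra! hcon
    exact hfin (sInf_eq_top.mpr fun _ ⟨n, _, hn⟩ ↦ absurd hn (hcon n))
  rw [GorensteinInjective.gorensteinInjectiveDimension_eq_sInf,
    GorensteinInjective.gorensteinInjectiveDimension_eq_sInf]
  refine le_sInf fun _ ⟨n, hi, hn⟩ ↦ sInf_le ⟨n, hi, hd.of_isTorsion'_ext fun P _ N hN i hni ↦ ?_⟩
  obtain ⟨e⟩ := GorensteinInjective.nonempty_localizationFunctor_equiv hpq M
  exact GorensteinInjective.isTorsion'_ext_of_equiv (Y := ModuleCat.of _ _) e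
    (hn.isTorsion'_ext (GorensteinInjective.localizationFunctor p q) hN hni)
end

section
/- Let R be a commutative noetherian ring and M an R-module admitting an exact sequence ⋯ → E_2 → E_1 → E_0 → M → 0 in which every E_i is an injective R-module. Then for every prime ideal p of R and every R_p-module T of finite projective dimension, Ext^i_{R_p}(T, M_p) = 0 for all i ≥ 1. -/
open CategoryTheory

universe u

/-- `T` has finite projective dimension over `S`: there is a projective resolution
`0 → P n → ⋯ → P 0 → T → 0` of finite length. -/
def HasFiniteProjectiveDimension (S : Type u) [CommRing S]
    (T : Type u) [AddCommGroup T] [Module S T] : Prop :=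
  ∃ (n : ℕ) (P : ℕ → Type u) (_ : ∀ j, AddCommGroup (P j)) (_ : ∀ j, Module S (P j))
    (ε : P 0 →ₗ[S] T) (d : ∀ j, P (j + 1) →ₗ[S] P j),
    (∀ j ≤ n, Module.Projective S (P j)) ∧
    (∀ j, n < j → Subsingleton (P j)) ∧
    Function.Surjective ε ∧ Function.Exact (d 0) ε ∧
    ∀ j, Function.Exact (d (j + 1)) (d j)

/-- If the `Ext`-group defined through the derived category vanishes, so does the one defined
as a left derived functor. -/
lemma subsingleton_ext_of_subsingleton_abelianExt {S : Type u} [CommRing S]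
    {X Y : ModuleCat.{u} S} {n : ℕ} (h : Subsingleton (Abelian.Ext X Y (n + 1))) :
    Subsingleton (((Ext S (ModuleCat.{u} S) (n + 1)).obj (Opposite.op X)).obj Y) := by
  let P := projectiveResolution X
  rw [← ModuleCat.isZero_iff_subsingleton]
  refine Limits.IsZero.of_iso ?_ (P.isoExt (R := S) (n + 1) Y)
  rw [← HomologicalComplex.exactAt_iff_isZero_homology,
    HomologicalComplex.exactAt_iff' _ n (n + 1) (n + 2) (by simp) (by simp),
    ShortComplex.moduleCat_exact_iff]
  intro (f : P.complex.X (n + 1) ⟶ Y) hf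
  exact (P.extMk_eq_zero_iff f (n + 2) rfl hf n rfl).1 (Subsingleton.elim _ _)

/-- Shifting an exact sequence `⋯ → E 1 → E 0 → M → 0` by one step, with `M` replaced by the
kernel of `E 0 → M`. -/
lemma surjective_and_exact_codRestrict_ker {S : Type u} [CommRing S] {M N P K : Type u}
    [AddCommGroup M] [Module S M] [AddCommGroup N] [Module S N] [AddCommGroup P] [Module S P]
    [AddCommGroup K] [Module S K] {f : N →ₗ[S] M} {g : P →ₗ[S] N} {h : K →ₗ[S] P}
    (hgf : Function.Exact g f) (hhg : Function.Exact h g) :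
    Function.Surjective (g.codRestrict (LinearMap.ker f) fun x ↦ hgf.apply_apply_eq_zero x) ∧
      Function.Exact h (g.codRestrict (LinearMap.ker f) fun x ↦ hgf.apply_apply_eq_zero x) := by
  refine ⟨fun ⟨y, hy⟩ ↦ ?_, fun x ↦ ?_⟩
  · obtain ⟨x, rfl⟩ := (hgf y).1 hy
    exact ⟨x, rfl⟩
  · rw [← hhg x, Subtype.ext_iff]
    rfl

lemma HasFiniteProjectiveDimension.exists_hasProjectiveDimensionLT {S : Type u} [CommRing S]
    {T : Type u} [AddCommGroup T] [Module S T] (hT : HasFiniteProjectiveDimension S T) :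
    ∃ n, HasProjectiveDimensionLT (ModuleCat.of S T) n := by
  obtain ⟨n, P, _, _, ε, d, hP, hP0, hε, h0, h⟩ := hT
  refine ⟨n + 1, ?_⟩
  induction n generalizing T P with
  | zero =>
    have hinj : Function.Injective ε := by
      rw [injective_iff_map_eq_zero]
      intro x hx
      obtain ⟨y, rfl⟩ := (h0 x).1 hx
      have := hP0 1 one_pos
      rw [Subsingleton.elim y 0, map_zero]
    have hP₀ := hP 0 le_rfl
    have : Module.Projective S T := .of_equiv (LinearEquiv.ofBijective ε ⟨hinj, hε⟩)
    have : Projective (ModuleCat.of S T) := (IsProjective.iff_projective _).1 inferInstance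
    infer_instance
  | succ n ih =>
    obtain ⟨h1, h2⟩ := surjective_and_exact_codRestrict_ker h0 (h 0)
    have hK := ih (fun j ↦ P (j + 1)) _ _ _ (fun j ↦ d (j + 1)) (fun j hj ↦ hP _ (by lia))
      (fun j hj ↦ hP0 _ (by lia)) h1 h2 (fun j ↦ h (j + 1))
    have := hP 0 (by lia)
    have hp : Projective (ModuleCat.of S (P 0)) := (IsProjective.iff_projective _).1 inferInstance
    exact ((LinearMap.shortExact_shortComplexKer hε).hasProjectiveDimensionLT_X₃_iff n hp).2 hK

/-- Dimension shifting along a resolution by injective modules on the left. -/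
lemma subsingleton_abelianExt_of_injective_left_resolution {S : Type u} [CommRing S]
    (X : ModuleCat.{u} S) (n : ℕ) [HasProjectiveDimensionLT X n]
    (M : Type u) [AddCommGroup M] [Module S M]
    (E : ℕ → Type u) [∀ j, AddCommGroup (E j)] [∀ j, Module S (E j)]
    (hE : ∀ j, Module.Injective S (E j))
    (ε : E 0 →ₗ[S] M) (d : ∀ j, E (j + 1) →ₗ[S] E j)
    (hsurj : Function.Surjective ε) (hex0 : Function.Exact (d 0) ε)
    (hex : ∀ j, Function.Exact (d (j + 1)) (d j)) (i : ℕ) :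
    Subsingleton (Abelian.Ext X (ModuleCat.of S M) (i + 1)) := by
  obtain ⟨k, hk⟩ : ∃ k, n ≤ i + k := ⟨n, by lia⟩
  induction k generalizing M E i with
  | zero => exact HasProjectiveDimensionLT.subsingleton X n _ (by lia) _
  | succ k ih =>
    obtain ⟨h1, h2⟩ := surjective_and_exact_codRestrict_ker hex0 (hex 0)
    have hK := ih _ (fun j ↦ E (j + 1)) (fun j ↦ hE _) _ (fun j ↦ d (j + 1)) h1 h2
      (fun j ↦ hex (j + 1)) (i + 1) (by lia)
    have := hE 0
    have : Injective (ModuleCat.of S (E 0)) := Module.injective_object_of_injective_module _ _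
    refine subsingleton_of_forall_eq 0 fun x ↦ ?_
    obtain ⟨y, rfl⟩ := Abelian.Ext.covariant_sequence_exact₃ X
      (LinearMap.shortExact_shortComplexKer hsurj) x rfl (@Subsingleton.elim _ hK _ _)
    simp [Abelian.Ext.eq_zero_of_injective (I := ModuleCat.of S (E 0)) y]

/-- Let `R` be a commutative noetherian ring and `M` an `R`-module with an exact sequence
`⋯ → E 2 → E 1 → E 0 → M → 0` of injective `R`-modules.  Then for every prime ideal `p`
of `R` and every `R_p`-module `T` of finite projective dimension,
`Ext^i_{R_p}(T, M_p) = 0` for all `i ≥ 1`. -/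
theorem ext_subsingleton_of_injective_resolution_of_finite_projdim
    (R : Type u) [CommRing R] [IsNoetherianRing R]
    (M : Type u) [AddCommGroup M] [Module R M]
    (E : ℕ → Type u) [∀ j, AddCommGroup (E j)] [∀ j, Module R (E j)]
    (hE : ∀ j, Module.Injective R (E j))
    (ε : E 0 →ₗ[R] M) (d : ∀ j, E (j + 1) →ₗ[R] E j)
    (hsurj : Function.Surjective ε) (hex0 : Function.Exact (d 0) ε)
    (hex : ∀ j, Function.Exact (d (j + 1)) (d j))
    (p : Ideal R) [p.IsPrime]
    (T : Type u) [AddCommGroup T] [Module (Localization.AtPrime p) T]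
    (hT : HasFiniteProjectiveDimension (Localization.AtPrime p) T)
    (i : ℕ) (hi : 1 ≤ i) :
    Subsingleton
      (((Ext (Localization.AtPrime p) (ModuleCat (Localization.AtPrime p)) i).obj
        (Opposite.op (ModuleCat.of (Localization.AtPrime p) T))).obj
          (ModuleCat.of (Localization.AtPrime p) (LocalizedModule p.primeCompl M))) := by
  obtain ⟨i, rfl⟩ := Nat.exists_eq_add_of_le' hi
  obtain ⟨n, hn⟩ := hT.exists_hasProjectiveDimensionLT
  let mk (N : Type u) [AddCommGroup N] [Module R N] :=
    LocalizedModule.mkLinearMap p.primeCompl N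
  refine subsingleton_ext_of_subsingleton_abelianExt <|
    subsingleton_abelianExt_of_injective_left_resolution _ n _
      (fun j ↦ LocalizedModule p.primeCompl (E j)) (fun j ↦ ?_)
      (LocalizedModule.map p.primeCompl ε) (fun j ↦ LocalizedModule.map p.primeCompl (d j))
      (LocalizedModule.map_surjective _ _ hsurj) ?_ (fun j ↦ ?_) i
  · have := hE j
    exact Module.injective_of_isLocalizedModule p.primeCompl (mk (E j))
  · exact LocalizedModule.map_exact p.primeCompl _ _ hex0
  · exact LocalizedModule.map_exact p.primeCompl _ _ (hex j)
end
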